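/- Let (ξ_t)_{t∈ℕ₀} be a sequence of real-valued random variables adapted to a filtration (F_t)_{t∈ℕ₀}. Suppose there exist constants γ > 0 and J, M < ∞ such that ξ_0 ≤ J, and for all t: 𝔼[ξ_{t+1} − ξ_t | F_t] ≤ −γ almost surely on the event {ξ_t > J}, and 𝔼[ |ξ_{t+1} − ξ_t|⁴ | ξ_0,…,ξ_t ] ≤ M almost surely. Then there exists a constant c > 0 such that sup_{t∈ℕ₀} 𝔼[(ξ_t⁺)²] ≤ c, where x⁺ := max(0,x). -/

import Mathlib

open MeasureTheory ProbabilityTheory Real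
open scoped ENNReal NNReal RealInnerProductSpace Matrix

noncomputable section

/-- Conditional expectation of `g` given the σ-algebra `m` (notation-free wrapper). -/
def cexp {Ω : Type*} {m0 : MeasurableSpace Ω} (P : Measure Ω) (m : MeasurableSpace Ω)
    (g : Ω → ℝ) : Ω → ℝ := P[g|m]

/-- Conditional probability of the event `s` given the σ-algebra `m`. -/
def cprob {Ω : Type*} {m0 : MeasurableSpace Ω} (P : Measure Ω) (m : MeasurableSpace Ω)
    (s : Set Ω) : Ω → ℝ := cexp P m (s.indicator fun _ => (1 : ℝ))


lemma pr_aux_mul {Ω : Type*} {m m0 : MeasurableSpace Ω} (P : Measure Ω)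
    [IsProbabilityMeasure P] (hm : m ≤ m0) (f g : Ω → ℝ) (c : ℝ)
    (hf : StronglyMeasurable[m] f) (hf0 : ∀ ω, 0 ≤ f ω) (hfi : Integrable f P)
    (hg : Integrable g P) (hfg : Integrable (fun ω => f ω * g ω) P)
    (hc : ∀ᵐ ω ∂P, f ω ≠ 0 → (P[g|m]) ω ≤ c) :
    ∫ ω, f ω * g ω ∂P ≤ c * ∫ ω, f ω ∂P := by
  have h1 := condExp_mul_of_stronglyMeasurable_left (μ := P) hf hfg hg
  rw [← integral_const_mul, ← integral_condExp hm (f := fun ω => f ω * g ω)]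
  refine integral_mono_ae integrable_condExp (hfi.const_mul c) ?_
  filter_upwards [h1, hc] with ω h1 h2
  have h3 : (P[fun ω => f ω * g ω|m]) ω = f ω * (P[g|m]) ω := h1
  rw [h3]
  by_cases h : f ω = 0
  · simp [h]
  · have := mul_le_mul_of_nonneg_left (h2 h) (hf0 ω)
    linarith

lemma pr_aux_step {Ω : Type*} {mF mG m0 : MeasurableSpace Ω} (P : Measure Ω)
    [IsProbabilityMeasure P] (hF : mF ≤ m0) (hG : mG ≤ m0) (hGF : mG ≤ mF)
    (D : Set Ω) (hD : MeasurableSet[mG] D) (z δ : Ω → ℝ) (hz : Measurable[mG] z)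
    (b γ M : ℝ) (hb : 1 ≤ b) (hM : 0 ≤ M) (hbM : 8 + 11 * M ≤ 2 * γ * b)
    (hzb : ∀ ω ∈ D, b ≤ z ω)
    (hz4 : Integrable (D.indicator fun ω => z ω ^ 4) P)
    (hδ : Integrable δ P) (hδ4 : Integrable (fun ω => δ ω ^ 4) P)
    (h1 : ∀ᵐ ω ∂P, ω ∈ D → (P[δ|mF]) ω ≤ -(γ / 2))
    (h4 : ∀ᵐ ω ∂P, (P[fun ω => δ ω ^ 4|mG]) ω ≤ M) :
    Integrable (D.indicator fun ω => (z ω + δ ω) ^ 4) P ∧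
    ∫ ω, D.indicator (fun ω => (z ω + δ ω) ^ 4) ω ∂P
      ≤ ∫ ω, D.indicator (fun ω => z ω ^ 4) ω ∂P := by
  set y : Ω → ℝ := D.indicator z with hy
  set d : Ω → ℝ := D.indicator (fun _ => (1 : ℝ)) with hd
  have hyD : ∀ ω, (ω ∈ D ∧ y ω = z ω ∧ d ω = 1) ∨ (ω ∉ D ∧ y ω = 0 ∧ d ω = 0) := by
    intro ω
    by_cases h : ω ∈ D
    · left; simp [hy, hd, h]
    · right; simp [hy, hd, h]
  have hymG : Measurable[mG] y := hz.indicator hD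
  have hdmG : Measurable[mG] d := (@measurable_const _ _ _ mG _).indicator hD
  have hymF : Measurable[mF] y := hymG.mono hGF le_rfl
  have hym : Measurable y := hymG.mono hG le_rfl
  have hdm : Measurable d := hdmG.mono hG le_rfl
  have hzm : Measurable z := hz.mono hG le_rfl
  have hδm := hδ.aestronglyMeasurable
  have hy0 : ∀ ω, 0 ≤ y ω := by
    intro ω
    rcases hyD ω with ⟨h, h', -⟩ | ⟨h, h', -⟩
    · rw [h']; linarith [hzb ω h]
    · rw [h']
  have hy4e : (D.indicator fun ω => z ω ^ 4) = fun ω => y ω ^ 4 := by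
    ext ω
    by_cases h : ω ∈ D <;> simp [hy, h]
  rw [hy4e] at hz4 ⊢
  have p23 : ∀ x : ℝ, 0 ≤ x → x ^ 2 ≤ 1 + x ^ 4 ∧ x ^ 3 ≤ 1 + x ^ 4 := by
    intro x hx
    constructor
    · nlinarith [sq_nonneg (x ^ 2 - 1)]
    · nlinarith [sq_nonneg (x ^ 2 - 1), sq_nonneg (x ^ 2 - x)]
  have iy2 : Integrable (fun ω => y ω ^ 2) P := by
    refine ((integrable_const (1 : ℝ)).add hz4).mono' (by fun_prop) (ae_of_all _ fun ω => ?_)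
    rw [Real.norm_of_nonneg (by positivity)]
    exact (p23 _ (hy0 ω)).1
  have iy3 : Integrable (fun ω => y ω ^ 3) P := by
    refine ((integrable_const (1 : ℝ)).add hz4).mono' (by fun_prop) (ae_of_all _ fun ω => ?_)
    rw [Real.norm_of_nonneg (pow_nonneg (hy0 ω) 3)]
    exact (p23 _ (hy0 ω)).2
  have id : Integrable d P := by
    refine (integrable_const (1 : ℝ)).mono' (by fun_prop) (ae_of_all _ fun ω => ?_)
    rcases hyD ω with ⟨-, -, h⟩ | ⟨-, -, h⟩ <;> simp [h]
  have iδ2 : Integrable (fun ω => δ ω ^ 2) P := by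
    refine ((integrable_const (1 : ℝ)).add hδ4).mono' (by fun_prop) (ae_of_all _ fun ω => ?_)
    rw [Real.norm_of_nonneg (by positivity)]
    change δ ω ^ 2 ≤ 1 + δ ω ^ 4
    nlinarith [sq_nonneg (δ ω ^ 2 - 1)]
  have h31 : Integrable (fun ω => y ω ^ 3 * δ ω) P := by
    refine (hz4.add hδ4).mono' (by fun_prop) (ae_of_all _ fun ω => ?_)
    change |y ω ^ 3 * δ ω| ≤ y ω ^ 4 + δ ω ^ 4
    rw [abs_le]
    constructor
    · nlinarith [sq_nonneg (y ω ^ 2 + y ω * δ ω), sq_nonneg (y ω ^ 2 - δ ω ^ 2), sq_nonneg (δ ω ^ 2), sq_nonneg (y ω ^ 2)]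
    · nlinarith [sq_nonneg (y ω ^ 2 - y ω * δ ω), sq_nonneg (y ω ^ 2 - δ ω ^ 2), sq_nonneg (δ ω ^ 2), sq_nonneg (y ω ^ 2)]
  have h22 : Integrable (fun ω => y ω ^ 2 * δ ω ^ 2) P := by
    refine (hz4.add hδ4).mono' (by fun_prop) (ae_of_all _ fun ω => ?_)
    rw [Real.norm_of_nonneg (by positivity)]
    change y ω ^ 2 * δ ω ^ 2 ≤ y ω ^ 4 + δ ω ^ 4
    nlinarith [sq_nonneg (y ω ^ 2 - δ ω ^ 2), sq_nonneg (δ ω ^ 2), sq_nonneg (y ω ^ 2)]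
  have h04 : Integrable (fun ω => d ω * δ ω ^ 4) P := by
    refine hδ4.mono' (by fun_prop) (ae_of_all _ fun ω => ?_)
    have : (0 : ℝ) ≤ δ ω ^ 4 := by positivity
    rcases hyD ω with ⟨-, -, h⟩ | ⟨-, -, h⟩
    · rw [h, one_mul, Real.norm_of_nonneg this]
    · rw [h, zero_mul, norm_zero]; exact this
  have hpt : ∀ ω, D.indicator (fun ω => (z ω + δ ω) ^ 4) ω ≤
      y ω ^ 4 + (4 * (y ω ^ 3 * δ ω) + (8 * (y ω ^ 2 * δ ω ^ 2) + 3 * (d ω * δ ω ^ 4))) := by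
    intro ω
    rcases hyD ω with ⟨h, h', h''⟩ | ⟨h, h', h''⟩
    · rw [Set.indicator_of_mem h, h', h'']
      nlinarith [sq_nonneg (z ω * δ ω - δ ω ^ 2)]
    · rw [Set.indicator_of_notMem h, h', h'']
      simp
  have iR := hz4.add ((h31.const_mul 4).add ((h22.const_mul 8).add (h04.const_mul 3)))
  have iL : Integrable (D.indicator fun ω => (z ω + δ ω) ^ 4) P := by
    refine iR.mono' ?_ (ae_of_all _ fun ω => ?_)
    · exact AEStronglyMeasurable.indicator (by fun_prop) (hG _ hD)
    · rw [Real.norm_of_nonneg (Set.indicator_nonneg (fun ω _ => by positivity) ω)]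
      exact hpt ω
  refine ⟨iL, ?_⟩
  have e1 := pr_aux_mul P hF (fun ω => y ω ^ 3) δ (-(γ / 2))
    (hymF.pow_const 3).stronglyMeasurable (fun ω => pow_nonneg (hy0 ω) 3) iy3 hδ h31 (by
      filter_upwards [h1] with ω h1 hne
      apply h1
      by_contra hn
      exact hne (by simp [hy, hn]))
  have e2 := pr_aux_mul P hG (fun ω => y ω ^ 2) (fun ω => δ ω ^ 2) (1 + M)
    (hymG.pow_const 2).stronglyMeasurable (fun ω => by positivity) iy2 iδ2 h22 (by
      have a1 : (P[fun ω => δ ω ^ 2|mG]) ≤ᵐ[P] P[(fun _ => (1 : ℝ)) + (fun ω => δ ω ^ 4)|mG] := by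
        refine condExp_mono iδ2 ((integrable_const (1 : ℝ)).add hδ4) (ae_of_all _ fun ω => ?_)
        change δ ω ^ 2 ≤ 1 + δ ω ^ 4
        nlinarith [sq_nonneg (δ ω ^ 2 - 1)]
      have a2 := condExp_add (μ := P) (integrable_const (1 : ℝ)) hδ4 mG
      have a3 := condExp_const (μ := P) hG (1 : ℝ)
      filter_upwards [a1, a2, h4] with ω a1 a2 h4 _
      rw [a2, Pi.add_apply, a3] at a1
      linarith)
  have e3 := pr_aux_mul P hG d (fun ω => δ ω ^ 4) M
    hdmG.stronglyMeasurable
    (fun ω => by rcases hyD ω with ⟨-, -, h⟩ | ⟨-, -, h⟩ <;> simp [h]) id hδ4 h04 (by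
      filter_upwards [h4] with ω h4 _ using h4)
  have e4 : ∫ ω, d ω ∂P ≤ ∫ ω, y ω ^ 2 ∂P := by
    refine integral_mono id iy2 fun ω => ?_
    rcases hyD ω with ⟨h, h', h''⟩ | ⟨h, h', h''⟩
    · simp only [h', h'']; nlinarith [hzb ω h]
    · simp [h', h'']
  have e5 : b * ∫ ω, y ω ^ 2 ∂P ≤ ∫ ω, y ω ^ 3 ∂P := by
    rw [← integral_const_mul]
    refine integral_mono (iy2.const_mul b) iy3 fun ω => ?_
    rcases hyD ω with ⟨h, h', h''⟩ | ⟨h, h', h''⟩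
    · simp only [h']; nlinarith [mul_nonneg (sub_nonneg.2 (hzb ω h)) (sq_nonneg (z ω))]
    · simp [h']
  have e6 : 0 ≤ ∫ ω, y ω ^ 2 ∂P := integral_nonneg fun ω => by positivity
  have e7 := integral_mono iL iR hpt
  refine e7.trans ?_
  have e8 : ∫ ω, (y ω ^ 4 + (4 * (y ω ^ 3 * δ ω) + (8 * (y ω ^ 2 * δ ω ^ 2) + 3 * (d ω * δ ω ^ 4)))) ∂P
    = ∫ ω, y ω ^ 4 ∂P + (4 * ∫ ω, y ω ^ 3 * δ ω ∂P + (8 * ∫ ω, y ω ^ 2 * δ ω ^ 2 ∂P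
      + 3 * ∫ ω, d ω * δ ω ^ 4 ∂P)) := by
    have i1 : Integrable (fun ω => 8 * (y ω ^ 2 * δ ω ^ 2) + 3 * (d ω * δ ω ^ 4)) P :=
      (h22.const_mul 8).add (h04.const_mul 3)
    have i2 : Integrable (fun ω => 4 * (y ω ^ 3 * δ ω) +
        (8 * (y ω ^ 2 * δ ω ^ 2) + 3 * (d ω * δ ω ^ 4))) P := (h31.const_mul 4).add i1
    rw [integral_add hz4 i2, integral_add (h31.const_mul 4) i1, integral_add (h22.const_mul 8) (h04.const_mul 3), integral_const_mul, integral_const_mul,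
      integral_const_mul]
  change ∫ ω, (y ω ^ 4 + (4 * (y ω ^ 3 * δ ω) + (8 * (y ω ^ 2 * δ ω ^ 2) + 3 * (d ω * δ ω ^ 4)))) ∂P ≤ _
  rw [e8]
  have hγ : 0 ≤ γ := by
    by_contra hneg
    push Not at hneg
    nlinarith
  have e9 := mul_le_mul_of_nonneg_left e4 hM
  have e10 := mul_le_mul_of_nonneg_left e5 hγ
  have e11 := mul_le_mul_of_nonneg_right hbM e6
  linarith

lemma pr_aux_last (x : ℕ → ℝ) (J : ℝ) (h0 : x 0 ≤ J) (t : ℕ) (ht : J < x t) :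
    ∃ n < t, x (t - 1 - n) ≤ J ∧ ∀ k ≤ n, J < x (t - 1 - n + 1 + k) := by
  induction t with
  | zero => exact absurd h0 (not_le.2 ht)
  | succ t ih =>
    by_cases h : x t ≤ J
    · refine ⟨0, by omega, by simpa using h, ?_⟩
      intro k hk
      obtain rfl : k = 0 := by omega
      simpa using ht
    · obtain ⟨n, hn, h1, h2⟩ := ih (not_le.1 h)
      refine ⟨n + 1, by omega, ?_, ?_⟩
      · rwa [show t + 1 - 1 - (n + 1) = t - 1 - n by omega]
      · intro k hk
        rw [show t + 1 - 1 - (n + 1) = t - 1 - n by omega]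
        rcases Nat.lt_or_ge n k with h | h
        · rwa [show t - 1 - n + 1 + k = t + 1 by omega]
        · exact h2 k h

lemma pr_aux_sum (t : ℕ) : ∑ n ∈ Finset.range t, (((n : ℝ) + 1) ^ 2)⁻¹ ≤ 2 := by
  have h := sum_Ioo_inv_sq_le (α := ℝ) 0 (t + 1)
  have e : ∑ n ∈ Finset.range t, (((n : ℝ) + 1) ^ 2)⁻¹
      = ∑ i ∈ Finset.Ioo 0 (t + 1), ((i : ℝ) ^ 2)⁻¹ := by
    rw [show Finset.Ioo 0 (t + 1) = Finset.Ico 1 (t + 1) by ext; simp; omega,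
      Finset.sum_Ico_eq_sum_range]
    refine Finset.sum_congr (by simp) fun n _ => ?_
    push_cast
    rw [add_comm]
  rw [e]
  simpa using h

set_option maxHeartbeats 1600000 in
/-- **Proposition (Pemantle–Rosenthal): moment conditions for a uniformly bounded
second moment of the positive part under a negative drift.** -/
theorem pemantle_rosenthal {Ω : Type*} [m0 : MeasurableSpace Ω] (P : Measure Ω)
    [IsProbabilityMeasure P] (ξ : ℕ → Ω → ℝ) (F : Filtration ℕ m0)
    (hadp : Adapted F ξ)
    (hint : ∀ t, Integrable (ξ t) P)
    (hint4 : ∀ t, Integrable (fun ω => |ξ (t + 1) ω - ξ t ω| ^ 4) P)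
    (γ J M : ℝ) (hγ : 0 < γ)
    (h0 : ∀ᵐ ω ∂P, ξ 0 ω ≤ J)
    (hdrift : ∀ t : ℕ, ∀ᵐ ω ∂P, J < ξ t ω →
      cexp P (F t) (fun ω' => ξ (t + 1) ω' - ξ t ω') ω ≤ -γ)
    (hmom : ∀ t : ℕ, ∀ᵐ ω ∂P,
      cexp P (⨆ s ∈ Set.Iic t, MeasurableSpace.comap (ξ s) inferInstance)
        (fun ω' => |ξ (t + 1) ω' - ξ t ω'| ^ 4) ω ≤ M) :
    ∃ c : ℝ, 0 < c ∧ ∀ t : ℕ,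
      ∫⁻ ω, ENNReal.ofReal (max (ξ t ω) 0 ^ 2) ∂P ≤ ENNReal.ofReal c := by
  have hG : ∀ t, (⨆ s ∈ Set.Iic t, MeasurableSpace.comap (ξ s) inferInstance) ≤ F t := by
    intro t
    refine iSup₂_le fun s hs => ?_
    exact ((hadp s).comap_le).trans (F.mono hs)
  have hGm : ∀ t s, s ≤ t →
      Measurable[⨆ s ∈ Set.Iic t, MeasurableSpace.comap (ξ s) inferInstance] (ξ s) := by
    intro t s hs
    refine Measurable.mono (comap_measurable (ξ s)) ?_ le_rfl
    exact le_iSup₂_of_le s hs le_rfl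
  have hξm : ∀ t, Measurable (ξ t) := fun t => (hadp t).mono (F.le t) le_rfl
  have hM4 : ∀ t, ∫ ω, |ξ (t + 1) ω - ξ t ω| ^ 4 ∂P ≤ M := by
    intro t
    have h := hmom t
    rw [← integral_condExp ((hG t).trans (F.le t))]
    calc _ ≤ ∫ _, M ∂P := integral_mono_ae integrable_condExp (integrable_const M) h
      _ = M := by simp
  have hM0 : 0 ≤ M := le_trans (integral_nonneg fun ω => by positivity) (hM4 0)
  set M' : ℝ := 8 * M + γ ^ 4 / 2 with hM'
  have hM'0 : 0 ≤ M' := by positivity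
  set b : ℝ := 1 + (8 + 11 * M') / (2 * γ) with hbdef
  have hb1 : 1 ≤ b := by
    have : 0 ≤ (8 + 11 * M') / (2 * γ) := by positivity
    linarith
  have hbM : 8 + 11 * M' ≤ 2 * γ * b := by
    have : 2 * γ * b = 2 * γ + (8 + 11 * M') := by
      rw [hbdef]; field_simp
    linarith
  set K : ℝ := 8 * M + 8 * (b + γ / 2) ^ 4 with hK
  have hK0 : 0 ≤ K := by positivity
  let z : ℕ → ℕ → Ω → ℝ := fun s n ω => ξ (s + 1 + n) ω - J + b + γ / 2 * ((n : ℝ) + 1)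
  let D : ℕ → ℕ → Set Ω := fun s n => {ω | ξ s ω ≤ J ∧ ∀ k ≤ n, J < ξ (s + 1 + k) ω}
  have hDm : ∀ s n, MeasurableSet[⨆ r ∈ Set.Iic (s + 1 + n), MeasurableSpace.comap (ξ r) inferInstance] (D s n) := by
    intro s n
    have : D s n = ξ s ⁻¹' Set.Iic J ∩ ⋂ k : ℕ, ⋂ (_ : k ≤ n), ξ (s + 1 + k) ⁻¹' Set.Ioi J := by
      ext ω; simp [D]
    rw [this]
    refine MeasurableSet.inter (hGm _ s (by omega) measurableSet_Iic) ?_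
    refine MeasurableSet.iInter fun k => MeasurableSet.iInter fun hk => ?_
    exact hGm _ (s + 1 + k) (by omega) measurableSet_Ioi
  have hDm0 : ∀ s n, MeasurableSet (D s n) := fun s n => ((hG _).trans (F.le _)) _ (hDm s n)
  have hzm : ∀ s n, Measurable (z s n) := fun s n => by
    have := hξm (s + 1 + n)
    fun_prop
  have hzD : ∀ s n, ∀ ω ∈ D s n, b + γ / 2 * ((n : ℝ) + 1) ≤ z s n ω := by
    intro s n ω hω
    have := hω.2 n le_rfl
    simp only [z]
    linarith
  have p4 : ∀ x y : ℝ, (x + y) ^ 4 ≤ 8 * x ^ 4 + 8 * y ^ 4 := by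
    intro x y
    nlinarith [sq_nonneg (x ^ 2 - y ^ 2), sq_nonneg (x - y), sq_nonneg (x + y),
      mul_nonneg (sq_nonneg (x - y)) (sq_nonneg (x + y)),
      mul_nonneg (sq_nonneg (x - y)) (add_nonneg (sq_nonneg x) (sq_nonneg y)), sq_nonneg ((x - y) ^ 2)]
  have habs : ∀ x : ℝ, |x| ^ 4 = x ^ 4 := fun x => by
    rw [show (4 : ℕ) = 2 * 2 by norm_num, pow_mul, sq_abs, pow_mul]
  have key : ∀ s n, Integrable ((D s n).indicator fun ω => z s n ω ^ 4) P ∧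
      ∫ ω, (D s n).indicator (fun ω => z s n ω ^ 4) ω ∂P ≤ K := by
    intro s n
    induction n with
    | zero =>
      have hpt : ∀ ω, (D s 0).indicator (fun ω => z s 0 ω ^ 4) ω ≤
          8 * |ξ (s + 1) ω - ξ s ω| ^ 4 + 8 * (b + γ / 2) ^ 4 := by
        intro ω
        by_cases h : ω ∈ D s 0
        · rw [Set.indicator_of_mem h, habs]
          refine le_trans ?_ (p4 _ _)
          have h1 := hzD s 0 ω h
          have h2 := h.1
          simp only [z] at h1 ⊢
          simp only [Nat.cast_zero, add_zero] at h1 ⊢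
          refine pow_le_pow_left₀ (by linarith) (by linarith) 4
        · rw [Set.indicator_of_notMem h]
          positivity
      have iR : Integrable (fun ω => 8 * |ξ (s + 1) ω - ξ s ω| ^ 4 + 8 * (b + γ / 2) ^ 4) P :=
        ((hint4 s).const_mul 8).add (integrable_const _)
      have iL : Integrable ((D s 0).indicator fun ω => z s 0 ω ^ 4) P := by
        refine iR.mono' ?_ (ae_of_all _ fun ω => ?_)
        · exact (((hzm s 0).pow_const 4).indicator (hDm0 s 0)).aestronglyMeasurable
        · rw [Real.norm_of_nonneg (Set.indicator_nonneg (fun ω _ => by positivity) ω)]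
          exact hpt ω
      refine ⟨iL, (integral_mono iL iR hpt).trans ?_⟩
      rw [integral_add ((hint4 s).const_mul 8) (integrable_const _), integral_const_mul]
      have := hM4 s
      simp only [integral_const, probReal_univ, smul_eq_mul, one_mul]
      linarith
    | succ n ih =>
      obtain ⟨ih1, ih2⟩ := ih
      let t := s + 1 + n
      let Δ : Ω → ℝ := fun ω => ξ (t + 1) ω - ξ t ω
      have hΔ : Integrable Δ P := (hint (t + 1)).sub (hint t)
      have hΔ4 : Integrable (fun ω => Δ ω ^ 4) P := by
        have := hint4 t
        simpa only [habs] using this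
      let δ : Ω → ℝ := fun ω => Δ ω + γ / 2
      have hδ : Integrable δ P := hΔ.add (integrable_const _)
      have iB : Integrable (fun ω => 8 * Δ ω ^ 4 + γ ^ 4 / 2) P :=
        (hΔ4.const_mul 8).add (integrable_const _)
      have hB : ∀ ω, δ ω ^ 4 ≤ 8 * Δ ω ^ 4 + γ ^ 4 / 2 := fun ω => by
        refine (p4 _ _).trans (le_of_eq ?_)
        ring
      have hδ4 : Integrable (fun ω => δ ω ^ 4) P := by
        refine iB.mono' (hδ.aestronglyMeasurable.pow 4) (ae_of_all _ fun ω => ?_)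
        rw [Real.norm_of_nonneg (by positivity)]
        exact hB ω
      have c1 : ∀ᵐ ω ∂P, ω ∈ D s n → (P[δ|F t]) ω ≤ -(γ / 2) := by
        have a2 := condExp_add (μ := P) hΔ (integrable_const (γ / 2)) (F t)
        have a3 := condExp_const (μ := P) (F.le t) (γ / 2)
        filter_upwards [a2, hdrift t] with ω a2 a4 hω
        have a5 : (P[Δ|F t]) ω ≤ -γ := a4 (hω.2 n le_rfl)
        have a6 : (P[δ|F t]) ω = (P[Δ|F t]) ω + γ / 2 := by
          have := a2
          rw [Pi.add_apply, a3] at this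
          exact this
        rw [a6]; linarith
      have c4 : ∀ᵐ ω ∂P, (P[fun ω => δ ω ^ 4|⨆ r ∈ Set.Iic t,
          MeasurableSpace.comap (ξ r) inferInstance]) ω ≤ M' := by
        have a1 := condExp_mono (μ := P) (m := ⨆ r ∈ Set.Iic t,
          MeasurableSpace.comap (ξ r) inferInstance) hδ4 iB (ae_of_all _ hB)
        have a2 := condExp_add (μ := P) (hΔ4.const_mul 8) (integrable_const (γ ^ 4 / 2))
          (⨆ r ∈ Set.Iic t, MeasurableSpace.comap (ξ r) inferInstance)
        have a3 := condExp_const (μ := P) ((hG t).trans (F.le t)) (γ ^ 4 / 2)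
        have a5 := condExp_smul (μ := P) (8 : ℝ) (fun ω => Δ ω ^ 4)
          (⨆ r ∈ Set.Iic t, MeasurableSpace.comap (ξ r) inferInstance)
        have a6 := hmom t
        simp only [habs, cexp] at a6
        filter_upwards [a1, a2, a5, a6] with ω a1 a2 a5 a6
        refine a1.trans ?_
        refine (le_of_eq a2).trans ?_
        rw [Pi.add_apply, a3]
        have a7 := (le_of_eq a5).trans (mul_le_mul_of_nonneg_left a6 (by norm_num : (0 : ℝ) ≤ 8))
        rw [hM']
        exact add_le_add_left a7 _
      have hzG : Measurable[⨆ r ∈ Set.Iic t, MeasurableSpace.comap (ξ r) inferInstance] (z s n) := by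
        have := hGm t t le_rfl
        exact ((this.sub_const J).add_const b).add_const _
      obtain ⟨r1, r2⟩ := pr_aux_step P (F.le t) ((hG t).trans (F.le t)) (hG t) (D s n) (hDm s n)
        (z s n) δ hzG b γ M' hb1 hM'0 hbM
        (fun ω hω => by
          have h1 := hzD s n ω hω
          have : 0 ≤ γ / 2 * ((n : ℝ) + 1) := by positivity
          linarith) ih1 hδ hδ4 c1 c4
      have hpt : ∀ ω, (D s (n + 1)).indicator (fun ω => z s (n + 1) ω ^ 4) ω ≤
          (D s n).indicator (fun ω => (z s n ω + δ ω) ^ 4) ω := by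
        intro ω
        by_cases h : ω ∈ D s (n + 1)
        · have h' : ω ∈ D s n := ⟨h.1, fun k hk => h.2 k (by omega)⟩
          rw [Set.indicator_of_mem h, Set.indicator_of_mem h']
          apply le_of_eq
          congr 1
          simp only [z, δ, Δ, t]
          push_cast
          rw [← add_assoc (s + 1) n 1]
          ring
        · rw [Set.indicator_of_notMem h]
          exact Set.indicator_nonneg (fun ω _ => by positivity) ω
      have iL : Integrable ((D s (n + 1)).indicator fun ω => z s (n + 1) ω ^ 4) P := by
        refine r1.mono' ?_ (ae_of_all _ fun ω => ?_)
        · exact (((hzm s (n + 1)).pow_const 4).indicator (hDm0 s (n + 1))).aestronglyMeasurable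
        · rw [Real.norm_of_nonneg (Set.indicator_nonneg (fun ω _ => by positivity) ω)]
          exact hpt ω
      exact ⟨iL, (integral_mono iL r1 hpt).trans (r2.trans ih2)⟩
  refine ⟨2 * J ^ 2 + 2 * (4 / γ ^ 2 * K * 2) + 1, by positivity, fun t => ?_⟩
  let V : ℕ → Ω → ℝ := fun n => (D (t - 1 - n) n).indicator fun ω => z (t - 1 - n) n ω ^ 4
  let w : ℕ → ℝ := fun n => 4 / γ ^ 2 * (((n : ℝ) + 1) ^ 2)⁻¹
  have hw : ∀ n, 0 ≤ w n := fun n => by positivity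
  have hV : ∀ n ω, 0 ≤ V n ω := fun n ω => Set.indicator_nonneg (fun ω _ => by positivity) ω
  have hS0 : ∀ ω, 0 ≤ ∑ n ∈ Finset.range t, w n * V n ω :=
    fun ω => Finset.sum_nonneg fun n _ => mul_nonneg (hw n) (hV n ω)
  let S : Ω → ℝ := fun ω => 2 * J ^ 2 + 2 * ∑ n ∈ Finset.range t, w n * V n ω
  have iS' : Integrable (fun ω => ∑ n ∈ Finset.range t, w n * V n ω) P :=
    integrable_finsetSum _ fun n _ => (key (t - 1 - n) n).1.const_mul (w n)
  have iS : Integrable S P := (integrable_const _).add (iS'.const_mul 2)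
  have hle : ∀ᵐ ω ∂P, max (ξ t ω) 0 ^ 2 ≤ S ω := by
    filter_upwards [h0] with ω h0
    have hS := hS0 ω
    by_cases h : ξ t ω ≤ J
    · have h1 : max (ξ t ω) 0 ≤ |J| := max_le (h.trans (le_abs_self J)) (abs_nonneg J)
      have h2 := pow_le_pow_left₀ (le_max_right _ _) h1 2
      rw [sq_abs] at h2
      simp only [S]
      have h7 := sq_nonneg J
      linarith
    · push Not at h
      obtain ⟨n, hn, k1, k2⟩ := pr_aux_last (fun k => ξ k ω) J h0 t h
      have hD : ω ∈ D (t - 1 - n) n := ⟨k1, k2⟩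
      have hz := hzD _ _ ω hD
      have h3 : w n * V n ω ≤ ∑ n ∈ Finset.range t, w n * V n ω :=
        Finset.single_le_sum (f := fun n => w n * V n ω)
          (fun n _ => mul_nonneg (hw n) (hV n ω)) (Finset.mem_range.2 hn)
      have hVn : V n ω = z (t - 1 - n) n ω ^ 4 := Set.indicator_of_mem hD _
      have hzt : z (t - 1 - n) n ω = ξ t ω - J + b + γ / 2 * ((n : ℝ) + 1) := by
        simp only [z]
        rw [show t - 1 - n + 1 + n = t by omega]
      set Z := z (t - 1 - n) n ω
      have q : 0 < γ / 2 * ((n : ℝ) + 1) := by positivity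
      have hq : γ / 2 * ((n : ℝ) + 1) ≤ Z := by linarith
      have h4 : (ξ t ω - J) ^ 2 ≤ w n * V n ω := by
        have a1 : (ξ t ω - J) ^ 2 ≤ Z ^ 2 := pow_le_pow_left₀ (by linarith) (by linarith) 2
        have a2 : 1 ≤ w n * Z ^ 2 := by
          have a3 := pow_le_pow_left₀ q.le hq 2
          have a4 : w n * (γ / 2 * ((n : ℝ) + 1)) ^ 2 = 1 := by
            simp only [w]; field_simp; norm_num
          rw [← a4]
          exact mul_le_mul_of_nonneg_left a3 (hw n)
        rw [hVn]
        have a5 := mul_le_mul_of_nonneg_right a2 (sq_nonneg Z)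
        have a6 : w n * Z ^ 2 * Z ^ 2 = w n * Z ^ 4 := by ring
        linarith
      have h5 : max (ξ t ω) 0 ^ 2 ≤ ξ t ω ^ 2 := by
        rcases le_total (ξ t ω) 0 with h | h
        · rw [max_eq_right h]; nlinarith [sq_nonneg (ξ t ω)]
        · rw [max_eq_left h]
      have h6 : ξ t ω ^ 2 ≤ 2 * J ^ 2 + 2 * (ξ t ω - J) ^ 2 := by
        nlinarith only [sq_nonneg (ξ t ω - 2 * J)]
      simp only [S]
      linarith
  calc ∫⁻ ω, ENNReal.ofReal (max (ξ t ω) 0 ^ 2) ∂P ≤ ∫⁻ ω, ENNReal.ofReal (S ω) ∂P :=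
        lintegral_mono_ae (by filter_upwards [hle] with ω h using ENNReal.ofReal_le_ofReal h)
    _ = ENNReal.ofReal (∫ ω, S ω ∂P) := by
        rw [ofReal_integral_eq_lintegral_ofReal iS]
        refine ae_of_all _ fun ω => ?_
        have := hS0 ω
        change 0 ≤ S ω
        simp only [S]
        positivity
    _ ≤ _ := by
        apply ENNReal.ofReal_le_ofReal
        have e1 : ∫ ω, S ω ∂P = 2 * J ^ 2 + 2 * ∑ n ∈ Finset.range t, w n * ∫ ω, V n ω ∂P := by
          simp only [S]
          have i3 : ∀ n ∈ Finset.range t, Integrable (fun ω => w n * V n ω) P :=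
            fun n _ => (key (t - 1 - n) n).1.const_mul (w n)
          rw [integral_add (integrable_const _) (iS'.const_mul 2),
            integral_const_mul 2 (fun ω => ∑ n ∈ Finset.range t, w n * V n ω),
            integral_finsetSum _ i3]
          simp only [integral_const_mul, integral_const, probReal_univ, smul_eq_mul, one_mul]
        have e2 : ∑ n ∈ Finset.range t, w n * ∫ ω, V n ω ∂P ≤ 4 / γ ^ 2 * K * 2 := by
          calc _ ≤ ∑ n ∈ Finset.range t, w n * K :=
                Finset.sum_le_sum fun n _ =>
                  mul_le_mul_of_nonneg_left (key (t - 1 - n) n).2 (hw n)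
            _ = 4 / γ ^ 2 * K * ∑ n ∈ Finset.range t, (((n : ℝ) + 1) ^ 2)⁻¹ := by
                rw [Finset.mul_sum]
                refine Finset.sum_congr rfl fun n _ => ?_
                simp only [w]; ring
            _ ≤ _ := mul_le_mul_of_nonneg_left (pr_aux_sum t) (by positivity)
        rw [e1]
        linarith

end
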